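/- Let d ≥ 1 and n ≥ d be integers, and let γ = (1 2 ⋯ d) ∈ S_d be the full cycle. Then the unitary Weingarten function satisfies Wg(n, γ) = (−1)^{d−1} · Cat_{d−1} / Π_{j=−d+1}^{d−1} (n−j), where Cat_{d−1} = (2(d−1))!/(d!·(d−1)!) is the (d−1)-st Catalan number. -/

import Mathlib

/-- The number of cycles of a permutation of `Fin d`, counting fixed points as cycles of
length one. -/
def Equiv.Perm.cycleCount {d : ℕ} (σ : Equiv.Perm (Fin d)) : ℕ :=
  (Finset.univ.filter fun x => σ x = x).card + σ.cycleType.card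

namespace WgAux
open Equiv Finset

lemma option_fix_iff {α β : Type*} [DecidableEq α] (g : Option α → β) (x : Option α) (τ : Perm α) :
    (g ∘ (swap none x * optionCongr τ : Perm (Option α)) = g) ↔
      (g x = g none ∧ (fun y => g (some y)) ∘ τ = fun y => g (some y)) := by
  have key : g x = g none → g ∘ (swap none x : Perm (Option α)) = g := by
    intro h
    funext y
    simp only [Function.comp_apply]
    rcases eq_or_ne y none with rfl | h1
    · simp [h]
    rcases eq_or_ne y x with rfl | h2
    · simp [h]
    rw [swap_apply_of_ne_of_ne h1 h2]
  constructor
  · intro h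
    have h0 : g x = g none := by
      have := congrFun h none
      simpa using this
    refine ⟨h0, ?_⟩
    funext y
    have h1 := congrFun h (some y)
    have h2 := congrFun (key h0) (some (τ y))
    simp only [Function.comp_apply, Perm.mul_apply, optionCongr_apply, Option.map_some] at h1 h2 ⊢
    rw [← h1, h2]
  · rintro ⟨h0, h1⟩
    funext y
    have h2 := congrFun (key h0) (optionCongr τ y)
    simp only [Function.comp_apply, Perm.mul_apply] at h2 ⊢
    rw [h2]
    cases y with
    | none => simp
    | some y => simpa using congrFun h1 y

lemma asc_count (n : ℕ) (α : Type) [Fintype α] [DecidableEq α] :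
    ∑ q : Perm α, ∑ g : α → Fin n, (if g ∘ q = g then 1 else 0) =
      n.ascFactorial (Fintype.card α) := by
  classical
  refine Fintype.induction_empty_option (P := fun α [Fintype α] => ∀ [DecidableEq α],
    ∑ q : Perm α, ∑ g : α → Fin n, (if g ∘ q = g then 1 else 0) =
      n.ascFactorial (Fintype.card α)) ?_ ?_ ?_ α
  · intro α β _ e ih _
    let _ := Fintype.ofEquiv β e.symm
    have := @ih (fun a b => Classical.propDecidable _)
    rw [Fintype.card_congr e] at this
    rw [← this]
    symm
    refine Fintype.sum_equiv (Equiv.permCongr e) _ _ fun q => ?_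
    refine Fintype.sum_equiv (Equiv.arrowCongr e (Equiv.refl _)) _ _ fun g => ?_
    congr 1
    simp only [eq_iff_iff]
    constructor
    · intro h
      funext x
      have := congrFun h (e.symm x)
      simpa using this
    · intro h
      funext x
      have := congrFun h (e x)
      simpa using this
  · intro _
    simp
  · intro α _ ih inst
    obtain rfl : inst = Option.instDecidableEq := Subsingleton.elim _ _
    have h1 := ih
    rw [← (Equiv.Perm.decomposeOption (α := α)).symm.sum_comp, Fintype.sum_prod_type]
    simp only [Perm.decomposeOption_symm_apply]
    have h2 : ∀ (x : Option α) (τ : Perm α), (∑ g : Option α → Fin n, (if g ∘ (swap none x * optionCongr τ : Perm (Option α)) = g then 1 else 0))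
      = ∑ g : α → Fin n, ∑ v : Fin n, if (Option.elim x v g = v ∧ g ∘ τ = g) then 1 else 0 := by
      intro x τ
      rw [← Fintype.sum_prod_type', ← (Equiv.piOptionEquivProd (β := fun _ : Option α => Fin n)).symm.sum_comp]
      refine Fintype.sum_equiv (Equiv.prodComm _ _) _ _ fun gv => ?_
      refine if_congr ?_ rfl rfl
      rw [option_fix_iff]
      cases x <;> simp [Equiv.piOptionEquivProd]
    have h3 : ∀ (x : Option α) (τ : Perm α), (∑ g : Option α → Fin n, (if g ∘ (swap none x * optionCongr τ : Perm (Option α)) = g then 1 else 0))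
      = ∑ g : α → Fin n, if g ∘ τ = g then (∑ v : Fin n, if Option.elim x v g = v then 1 else 0) else 0 := by
      intro x τ
      rw [h2]
      refine Finset.sum_congr rfl fun g _ => ?_
      split_ifs with h <;> simp [h]
    rw [Finset.sum_comm]
    rw [Fintype.card_option, Nat.ascFactorial_succ, ← h1, Finset.mul_sum]
    refine Finset.sum_congr rfl fun τ _ => ?_
    trans ∑ x : Option α, ∑ g : α → Fin n, if g ∘ τ = g then (∑ v : Fin n, if Option.elim x v g = v then 1 else 0) else 0
    · exact Finset.sum_congr rfl fun x _ => by rw [← h3]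
    rw [Finset.sum_comm, Finset.mul_sum]
    refine Finset.sum_congr rfl fun g _ => ?_
    split_ifs with h
    · rw [Fintype.sum_option]
      have h4 : ∀ a : Fin n, (∑ v : Fin n, if a = v then 1 else 0) = 1 := fun a => by simp
      have h5 : (∑ i : α, ∑ v : Fin n, if Option.elim (some i) v g = v then 1 else 0) =
          Fintype.card α := (Finset.sum_congr rfl fun i _ => h4 (g i)).trans (by simp)
      rw [h5]
      simp
    · simp

lemma fix_count {d n : ℕ} (σ : Perm (Fin d)) :
    ∑ f : Fin d → Fin n, (if f ∘ σ = f then 1 else 0) = n ^ σ.cycleCount := by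
  classical
  let Φ : Fin d → Fin d ⊕ Perm (Fin d) := fun x => if σ x = x then Sum.inl x else Sum.inr (σ.cycleOf x)
  have hΦσ : ∀ x, Φ (σ x) = Φ x := by
    intro x
    simp only [Φ]
    by_cases h : σ x = x
    · simp [h]
    · have h' : σ (σ x) ≠ σ x := fun h' => h (σ.injective h')
      simp [h]
  have hΦ : ∀ x y, Φ x = Φ y → σ.SameCycle x y := by
    intro x y h
    simp only [Φ] at h
    split_ifs at h with h1 h2 h2
    · simp at h; subst h; exact Perm.SameCycle.refl _ _
    · simp at h
      replace h1 := Perm.mem_support.2 h1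
      replace h2 := Perm.mem_support.2 h2
      rwa [Perm.sameCycle_iff_cycleOf_eq_of_mem_support h1 h2]
  have hfix : ∀ f : Fin d → Fin n, f ∘ σ = f → ∀ x y, Φ x = Φ y → f x = f y := by
    intro f hf x y h
    obtain ⟨k, hk⟩ := (hΦ x y h).exists_nat_pow_eq
    rw [← hk]
    clear hk
    induction k with
    | zero => simp
    | succ k ih => rw [pow_succ', Perm.mul_apply, ih]; exact (congrFun hf _).symm
  have himg : (univ.image Φ) = (univ.filter fun x => σ x = x).disjSum σ.cycleFactorsFinset := by
    ext a
    simp only [mem_image, mem_univ, true_and, Finset.mem_disjSum, mem_filter, Φ]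
    constructor
    · rintro ⟨x, rfl⟩
      by_cases h : σ x = x
      · left; exact ⟨x, h, by simp [h]⟩
      · right
        exact ⟨σ.cycleOf x, Perm.cycleOf_mem_cycleFactorsFinset_iff.2 (Perm.mem_support.2 h), by simp [h]⟩
    · rintro (⟨x, h, rfl⟩ | ⟨c, hc, rfl⟩)
      · exact ⟨x, by simp [h]⟩
      · obtain ⟨hc1, hc2⟩ := Perm.mem_cycleFactorsFinset_iff.1 hc
        obtain ⟨x, hx⟩ := hc1.nonempty_support
        refine ⟨x, ?_⟩
        have h1 := Perm.cycle_is_cycleOf hx hc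
        have h2 : σ x ≠ x := Perm.mem_support.1 (Perm.mem_cycleFactorsFinset_support_le hc hx)
        simp [h2, ← h1]
  have hcard : σ.cycleCount = (univ.image Φ).card := by
    rw [himg, Finset.card_disjSum, Perm.cycleCount, Perm.cycleType_def, Multiset.card_map]
    rfl
  have hpow : n ^ (univ.image Φ).card = Fintype.card ((univ.image Φ) → Fin n) := by
    rw [Fintype.card_fun, Fintype.card_coe, Fintype.card_fin]
  rw [hcard, hpow, ← Finset.card_filter, ← Fintype.card_subtype]
  refine (Fintype.card_congr ?_).symm
  have hmem : ∀ x, Φ x ∈ univ.image Φ := fun x => mem_image_of_mem _ (mem_univ _)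
  refine Equiv.ofBijective (fun g => ⟨fun x => g ⟨Φ x, hmem x⟩, ?_⟩) ⟨?_, ?_⟩
  · funext x
    simp [hΦσ]
  · intro g g' h
    funext ⟨a, ha⟩
    obtain ⟨x, _, rfl⟩ := mem_image.1 ha
    exact congrFun (Subtype.ext_iff.1 h) x
  · rintro ⟨f, hf⟩
    have hch : ∀ a : (univ.image Φ), ∃ x, Φ x = a.1 := fun a => by
      obtain ⟨x, _, hx⟩ := mem_image.1 a.2
      exact ⟨x, hx⟩
    choose s hs using hch
    refine ⟨fun a => f (s a), ?_⟩
    ext x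
    simp only
    rw [hfix f hf _ x (hs _)]

end WgAux
namespace WgAux
open Equiv Finset

/-- permutations moving only `S ∪ {z}` -/
def PU {d : ℕ} (z : Fin d) (S : Finset (Fin d)) : Finset (Perm (Fin d)) :=
  univ.filter fun p => ∀ x, x ∉ S → x ≠ z → p x = x

/-- permutations fixing `S` -/
def QV {d : ℕ} (S : Finset (Fin d)) : Finset (Perm (Fin d)) :=
  univ.filter fun q => ∀ x ∈ S, q x = x

lemma mem_PU {d : ℕ} {z : Fin d} {S : Finset (Fin d)} {p : Perm (Fin d)} :
    p ∈ PU z S ↔ ∀ x, x ∉ S → x ≠ z → p x = x := by simp [PU]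

lemma mem_QV {d : ℕ} {S : Finset (Fin d)} {q : Perm (Fin d)} :
    q ∈ QV S ↔ ∀ x ∈ S, q x = x := by simp [QV]

lemma PU_mul {d : ℕ} {z : Fin d} {S : Finset (Fin d)} {p p' : Perm (Fin d)}
    (h : p ∈ PU z S) (h' : p' ∈ PU z S) : p * p' ∈ PU z S := by
  rw [mem_PU] at *
  intro x h1 h2
  rw [Perm.mul_apply, h' x h1 h2, h x h1 h2]

lemma PU_inv {d : ℕ} {z : Fin d} {S : Finset (Fin d)} {p : Perm (Fin d)}
    (h : p ∈ PU z S) : p⁻¹ ∈ PU z S := by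
  rw [mem_PU] at *
  intro x h1 h2
  rw [Perm.inv_eq_iff_eq, h x h1 h2]

lemma QV_mul {d : ℕ} {S : Finset (Fin d)} {p p' : Perm (Fin d)}
    (h : p ∈ QV S) (h' : p' ∈ QV S) : p * p' ∈ QV S := by
  rw [mem_QV] at *
  intro x h1
  rw [Perm.mul_apply, h' x h1, h x h1]

lemma QV_inv {d : ℕ} {S : Finset (Fin d)} {p : Perm (Fin d)}
    (h : p ∈ QV S) : p⁻¹ ∈ QV S := by
  rw [mem_QV] at *
  intro x h1
  rw [Perm.inv_eq_iff_eq, h x h1]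

lemma PU_swap {d : ℕ} {z : Fin d} {S : Finset (Fin d)} {i j : Fin d}
    (hi : i ∈ insert z S) (hj : j ∈ insert z S) : swap i j ∈ PU z S := by
  rw [mem_PU]
  intro x h1 h2
  apply swap_apply_of_ne_of_ne
  · rintro rfl; simp [h1, h2] at hi
  · rintro rfl; simp [h1, h2] at hj

lemma QV_swap {d : ℕ} {S : Finset (Fin d)} {i j : Fin d}
    (hi : i ∉ S) (hj : j ∉ S) : swap i j ∈ QV S := by
  rw [mem_QV]
  intro x h1
  apply swap_apply_of_ne_of_ne
  · rintro rfl; exact hi h1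
  · rintro rfl; exact hj h1

/-- `p ∈ PU` preserves `insert z S`. -/
lemma PU_mem {d : ℕ} {z : Fin d} {S : Finset (Fin d)} {p : Perm (Fin d)}
    (h : p ∈ PU z S) {x : Fin d} (hx : x ∈ insert z S) : p x ∈ insert z S := by
  by_contra hc
  simp only [mem_insert, not_or] at hc
  have := mem_PU.1 h _ hc.2 hc.1
  have h2 := p.injective this
  rw [h2] at hc
  simp [hc] at hx

lemma PU_QV_one {d : ℕ} {z : Fin d} {S : Finset (Fin d)} {p : Perm (Fin d)}
    (h : p ∈ PU z S) (h' : ∀ x ∈ S, p x = x) : p = 1 := by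
  rw [mem_PU] at h
  have hne : ∀ x, x ≠ z → p x = x := fun x hx => by
    by_cases hS : x ∈ S
    · exact h' x hS
    · exact h x hS hx
  ext x
  rcases eq_or_ne x z with rfl | hx
  · by_contra hc
    have : p x ≠ x := fun h => hc (by rw [h]; rfl)
    exact this (p.injective (hne _ this))
  · rw [hne x hx]; rfl

lemma inner_sum {d n : ℕ} {z : Fin d} {S : Finset (Fin d)} {q : Perm (Fin d)}
    (hq : q ∈ QV S) (f : Fin d → Fin n) [Decidable (Set.InjOn f (insert z S : Finset (Fin d)))] :
    ∑ p ∈ PU z S, ((Perm.sign p : ℤˣ) : ℤ) * (if f ∘ (p * q : Perm (Fin d)) = f then 1 else 0) =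
      if Set.InjOn f (insert z S : Finset (Fin d)) ∧ f ∘ q = f then 1 else 0 := by
  by_cases hf : Set.InjOn f (insert z S : Finset (Fin d))
  · have : ∀ p ∈ PU z S, f ∘ (p * q : Perm (Fin d)) = f → p = 1 := by
      intro p hp h
      apply PU_QV_one hp
      intro x hx
      have h1 := congrFun h x
      simp only [Function.comp_apply, Perm.mul_apply, mem_QV.1 hq x hx] at h1
      exact hf (by exact_mod_cast PU_mem hp (mem_insert_of_mem hx)) (by simp [hx]) h1
    rw [Finset.sum_eq_single 1]
    · simp only [hf, true_and]; simp
    · intro p hp h1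
      rw [if_neg (fun h => h1 (this p hp h))]; simp
    · intro h; exact absurd (mem_PU.2 (by simp)) h
  · simp only [hf, false_and, if_false]
    have hex : ∃ i ∈ insert z S, ∃ j ∈ insert z S, f i = f j ∧ i ≠ j := by
      by_contra! hc
      exact hf fun i hi j hj hij => hc i (by exact_mod_cast hi) j (by exact_mod_cast hj) hij
    obtain ⟨i, hi, j, hj, hij, hne⟩ := hex
    have hs : f ∘ (swap i j) = f := by
      funext x
      simp only [Function.comp_apply]
      rcases eq_or_ne x i with rfl | h1
      · simp [hij]
      rcases eq_or_ne x j with rfl | h2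
      · simp [hij]
      rw [swap_apply_of_ne_of_ne h1 h2]
    refine Finset.sum_involution (fun p _ => swap i j * p) ?_ ?_ ?_ ?_
    · intro p hp
      have : f ∘ (swap i j * p * q : Perm (Fin d)) = f ∘ (p * q : Perm (Fin d)) := by
        rw [mul_assoc, Perm.coe_mul, ← Function.comp_assoc, hs]
      rw [this]
      simp [Perm.sign_swap hne]
    · intro p hp _ h
      have : swap i j = 1 := by simpa using h
      exact hne (swap_eq_one_iff.1 this)
    · intro p hp
      exact PU_mul (PU_swap hi hj) hp
    · intro p hp
      simp [← mul_assoc]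

lemma desc_count {n : ℕ} {ι : Type} [Fintype ι] [DecidableEq ι] (v : Fin n)
    [∀ h : ι → Fin n, Decidable (Function.Injective h ∧ ∀ s, h s ≠ v)] :
    ∑ h : ι → Fin n, (if Function.Injective h ∧ ∀ s, h s ≠ v then 1 else 0) =
      (n - 1).descFactorial (Fintype.card ι) := by
  have h1 : Fintype.card {x : Fin n // x ≠ v} = n - 1 := by
    simp [Fintype.card_subtype_compl]
  rw [← h1, ← Fintype.card_embedding_eq, ← Finset.card_filter, ← Fintype.card_subtype]
  refine Fintype.card_congr ?_
  exact
    { toFun := fun h => ⟨fun s => ⟨h.1 s, h.2.2 s⟩, fun a b hab => h.2.1 (by simpa using hab)⟩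
      invFun := fun e => ⟨fun s => (e s).1, fun a b hab => e.injective (Subtype.ext hab),
        fun s => (e s).2⟩
      left_inv := fun h => rfl
      right_inv := fun e => rfl }

lemma pair_count {d n : ℕ} {z : Fin d} {S : Finset (Fin d)} (hz : z ∉ S)
    [∀ f : Fin d → Fin n, Decidable (Set.InjOn f (insert z S : Finset (Fin d)))] :
    ∑ q ∈ QV S, ∑ f : Fin d → Fin n,
      (if Set.InjOn f (insert z S : Finset (Fin d)) ∧ f ∘ q = f then 1 else 0) =
      n.ascFactorial (d - S.card) * (n - 1).descFactorial S.card := by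
  classical
  have hV : Fintype.card {x : Fin d // x ∉ S} = d - S.card := by
    simp [Fintype.card_subtype_compl]
  have hS : Fintype.card {x : Fin d // x ∈ S} = S.card := by simp
  have h1 : ∀ F : Perm (Fin d) → ℕ, ∑ q ∈ QV S, F q =
      ∑ q : Perm {x : Fin d // x ∉ S}, F (Perm.ofSubtype q) := by
    intro F
    symm
    refine Finset.sum_bij (fun q _ => Perm.ofSubtype q) ?_ ?_ ?_ ?_
    · intro q _
      rw [mem_QV]
      intro x hx
      exact Perm.ofSubtype_apply_of_not_mem q (by simpa using hx)
    · intro a _ b _ h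
      exact Perm.ofSubtype_injective h
    · intro q hq
      have hq' := mem_QV.1 hq
      have hq'' := mem_QV.1 (QV_inv hq)
      have hp : ∀ x, q x ∉ S ↔ x ∉ S := by
        intro x
        rw [not_iff_not]
        constructor
        · intro h
          have := hq'' _ h
          simp at this
          rwa [← this] at h
        · intro h
          rwa [hq' x h]
      refine ⟨q.subtypePerm hp, mem_univ _, ?_⟩
      apply Perm.ofSubtype_subtypePerm
      intro x hx hxS
      exact hx (hq' x hxS)
    · intro q _; rfl
  rw [h1]
  have h2 : ∀ q : Perm {x : Fin d // x ∉ S}, ∑ f : Fin d → Fin n,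
      (if Set.InjOn f (insert z S : Finset (Fin d)) ∧ f ∘ (Perm.ofSubtype q) = f then 1 else 0) =
      ∑ g : {x : Fin d // x ∉ S} → Fin n, ∑ h : {x : Fin d // x ∈ S} → Fin n,
        (if g ∘ q = g then 1 else 0) *
          (if Function.Injective h ∧ ∀ s, h s ≠ g ⟨z, hz⟩ then 1 else 0) := by
    intro q
    rw [Finset.sum_comm, ← Fintype.sum_prod_type',
      ← (Equiv.piEquivPiSubtypeProd (fun x => x ∈ S) (fun _ : Fin d => Fin n)).symm.sum_comp]
    refine Finset.sum_congr rfl fun hg _ => ?_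
    obtain ⟨h, g⟩ := hg
    simp only
    rw [ite_zero_mul_ite_zero, mul_one]
    refine if_congr ?_ rfl rfl
    set f := (Equiv.piEquivPiSubtypeProd (fun x => x ∈ S) (fun _ : Fin d => Fin n)).symm (h, g)
      with hfdef
    have hfS : ∀ x (hx : x ∈ S), f x = h ⟨x, hx⟩ := fun x hx => by
      simp [hfdef, Equiv.piEquivPiSubtypeProd, hx]
    have hfV : ∀ x (hx : x ∉ S), f x = g ⟨x, hx⟩ := fun x hx => by
      simp [hfdef, Equiv.piEquivPiSubtypeProd, hx]
    rw [and_comm]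
    refine and_congr ?_ ?_
    · constructor
      · intro hf
        funext x
        have h3 := congrFun hf x.1
        simp only [Function.comp_apply, Perm.ofSubtype_apply_coe] at h3 ⊢
        rwa [hfV _ (q x).2, hfV _ x.2] at h3
      · intro hg
        funext x
        simp only [Function.comp_apply]
        by_cases hx : x ∈ S
        · rw [Perm.ofSubtype_apply_of_not_mem q (by simpa using hx)]
        · have h3 := congrFun hg ⟨x, hx⟩
          have h4 := Perm.ofSubtype_apply_of_mem q (show x ∉ S from hx)
          rw [h4, hfV _ (q ⟨x, hx⟩).2, hfV x hx]
          exact h3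
    · constructor
      · intro hf
        constructor
        · intro a b hab
          rw [← hfS a.1 a.2, ← hfS b.1 b.2] at hab
          exact Subtype.ext (hf (by simp) (by simp) hab)
        · intro s hs
          rw [← hfS s.1 s.2, ← hfV z hz] at hs
          have := hf (by simp) (by simp) hs
          exact hz (this ▸ s.2)
      · rintro ⟨hi, hv⟩
        intro a ha b hb hab
        simp only [coe_insert, Set.mem_insert_iff, mem_coe] at ha hb
        rcases ha with rfl | ha <;> rcases hb with rfl | hb
        · rfl
        · rw [hfV _ hz, hfS _ hb] at hab
          exact absurd hab.symm (hv _)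
        · rw [hfV _ hz, hfS _ ha] at hab
          exact absurd hab (hv _)
        · rw [hfS _ ha, hfS _ hb] at hab
          simpa using hi hab
  simp only [h2, ← Finset.mul_sum]
  simp only [desc_count, hS]
  simp only [← Finset.sum_mul, asc_count, hV]

lemma signed_count {d n : ℕ} {z : Fin d} {S : Finset (Fin d)} (hz : z ∉ S) :
    ∑ p ∈ PU z S, ∑ q ∈ QV S, ((Perm.sign p : ℤˣ) : ℤ) * (n : ℤ) ^ (p * q).cycleCount =
      (n.ascFactorial (d - S.card) * (n - 1).descFactorial S.card : ℕ) := by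
  classical
  rw [← pair_count hz, Finset.sum_comm]
  simp only [Nat.cast_sum, Nat.cast_ite, Nat.cast_one, Nat.cast_zero]
  refine Finset.sum_congr rfl fun q hq => ?_
  have h1 : ∀ σ : Perm (Fin d), (n : ℤ) ^ σ.cycleCount =
      ∑ f : Fin d → Fin n, (if f ∘ σ = f then 1 else 0) := by
    intro σ
    have := fix_count (n := n) σ
    exact_mod_cast this.symm
  simp only [h1, Finset.mul_sum]
  rw [Finset.sum_comm]
  refine Finset.sum_congr rfl fun f _ => ?_
  exact inner_sum hq f

end WgAux
namespace WgAux
open Equiv Finset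

/-- index set of the sign reversing involution -/
def TT {d : ℕ} (z : Fin d) (σ : Perm (Fin d)) : Finset (Finset (Fin d) × Perm (Fin d)) :=
  univ.filter fun a => z ∉ a.1 ∧ a.2 ∈ PU z a.1 ∧ ∀ x ∈ a.1, a.2 x = σ x

lemma sign_cycleOf_aux {d : ℕ} (σ : Perm (Fin d)) (x : Fin d) :
    ((Perm.sign (σ.cycleOf x) : ℤˣ) : ℤ) = - (-1) ^ (univ.filter fun y => σ.SameCycle x y).card := by
  by_cases h : σ x = x
  · have h1 : (univ.filter fun y => σ.SameCycle x y) = {x} := by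
      ext y
      simp only [mem_filter, mem_univ, true_and, mem_singleton]
      constructor
      · intro hy
        exact (hy.eq_of_left h).symm
      · rintro rfl; exact Perm.SameCycle.refl _ _
    rw [h1, (Perm.cycleOf_eq_one_iff σ).2 h]
    simp
  · have h1 : (univ.filter fun y => σ.SameCycle x y) = (σ.cycleOf x).support := by
      ext y
      simp only [mem_filter, mem_univ, true_and]
      rw [Perm.mem_support_cycleOf_iff' h]
    rw [h1, (Perm.isCycle_cycleOf σ h).sign]
    simp

lemma TT_sum {d : ℕ} {z : Fin d} {σ : Perm (Fin d)} {x : Fin d} (hx : ¬ σ.SameCycle x z) :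
    ∑ a ∈ TT z σ, (-1 : ℤ) ^ a.1.card * ((Perm.sign a.2 : ℤˣ) : ℤ) = 0 := by
  classical
  set K := univ.filter fun y => σ.SameCycle x y with hK
  set c := σ.cycleOf x with hc
  have hsg : ((Perm.sign c : ℤˣ) : ℤ) = - (-1) ^ K.card := sign_cycleOf_aux σ x
  have hsg' : ((Perm.sign c⁻¹ : ℤˣ) : ℤ) = - (-1) ^ K.card := by rw [Perm.sign_inv]; exact hsg
  have memK : ∀ y, y ∈ K ↔ σ.SameCycle x y := fun y => by simp [hK]
  have hxK : x ∈ K := (memK x).2 (Perm.SameCycle.refl _ _)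
  have hzK : z ∉ K := fun h => hx ((memK z).1 h)
  have hσK : ∀ y, y ∈ K → σ y ∈ K := fun y hy =>
    (memK _).2 (Perm.sameCycle_apply_right.2 ((memK y).1 hy))
  have hcK : ∀ y, y ∈ K → c y = σ y := fun y hy => ((memK y).1 hy).cycleOf_apply
  have hcN : ∀ y, y ∉ K → c y = y := fun y hy =>
    Perm.cycleOf_apply_of_not_sameCycle (fun h => hy ((memK y).2 h))
  have hcc : ∀ y, c (c⁻¹ y) = y := fun y => by simp
  have hciN : ∀ y, y ∉ K → c⁻¹ y = y := fun y hy => by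
    rw [Perm.inv_eq_iff_eq, hcN y hy]
  have hciK : ∀ y, y ∈ K → c⁻¹ y ∈ K := fun y hy => by
    by_contra h
    have h2 := hcN _ h
    rw [hcc] at h2
    rw [← h2] at h
    exact h hy
  -- closure
  have hcl : ∀ S p, (S, p) ∈ TT z σ → ∀ y, y ∈ K → y ∈ S → σ y ∈ S := by
    intro S p h y hyK hyS
    simp only [TT, mem_filter, mem_univ, true_and] at h
    obtain ⟨h0, h1, h2⟩ := h
    have h3 := PU_mem h1 (mem_insert_of_mem hyS)
    rw [h2 y hyS, mem_insert] at h3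
    rcases h3 with h3 | h3
    · exact absurd (h3 ▸ hσK y hyK) hzK
    · exact h3
  have hcl2 : ∀ S p, (S, p) ∈ TT z σ → ∀ y, y ∈ K → y ∈ S → K ⊆ S := by
    intro S p h y hyK hyS w hw
    have h1 : σ.SameCycle y w := ((memK y).1 hyK).symm.trans ((memK w).1 hw)
    obtain ⟨k, hk⟩ := h1.exists_nat_pow_eq
    rw [← hk]
    clear hk h1
    suffices (σ ^ k) y ∈ K ∧ (σ ^ k) y ∈ S from this.2
    induction k with
    | zero => simp [hyK, hyS]
    | succ k ih =>
      rw [pow_succ', Perm.mul_apply]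
      exact ⟨hσK _ ih.1, hcl S p h _ ih.1 ih.2⟩
  have hdisj : ∀ S p, (S, p) ∈ TT z σ → x ∉ S → ∀ y ∈ S, y ∉ K := by
    intro S p h hxS y hy hyK
    exact hxS (hcl2 S p h y hyK hy hxK)
  have hsq : ((-1 : ℤ) ^ K.card) * (-1) ^ K.card = 1 := by rw [← mul_pow]; simp
  let e : Finset (Fin d) × Perm (Fin d) → Finset (Fin d) × Perm (Fin d) := fun a =>
    if x ∈ a.1 then (a.1 \ K, a.2 * c⁻¹) else (a.1 ∪ K, a.2 * c)
  have he1 : ∀ S p, x ∈ S → e (S, p) = (S \ K, p * c⁻¹) := fun S p h => by simp [e, h]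
  have he2 : ∀ S p, x ∉ S → e (S, p) = (S ∪ K, p * c) := fun S p h => by simp [e, h]
  refine Finset.sum_involution (fun a _ => e a) ?_ ?_ ?_ ?_
  · rintro ⟨S, p⟩ h
    by_cases hxS : x ∈ S
    · have hKS := hcl2 S p h x hxK hxS
      rw [he1 S p hxS]
      simp only
      have hcard : S.card = (S \ K).card + K.card := by
        rw [Finset.card_sdiff_add_card_eq_card hKS]
      rw [hcard, pow_add, Perm.sign_mul, Units.val_mul, hsg']
      linear_combination (0 : ℤ) * hsq
    · have hd := hdisj S p h hxS
      rw [he2 S p hxS]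
      simp only
      have hcard : (S ∪ K).card = S.card + K.card :=
        Finset.card_union_of_disjoint (Finset.disjoint_left.2 hd)
      rw [hcard, pow_add, Perm.sign_mul, Units.val_mul, hsg]
      linear_combination (-(-1 : ℤ) ^ S.card * ((Perm.sign p : ℤˣ) : ℤ)) * hsq
  · rintro ⟨S, p⟩ h _ heq
    by_cases hxS : x ∈ S
    · rw [he1 S p hxS, Prod.mk.injEq] at heq
      have := heq.1 ▸ hxS
      simp [hxK] at this
    · rw [he2 S p hxS, Prod.mk.injEq] at heq
      exact hxS (heq.1 ▸ (mem_union_right _ hxK))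
  · rintro ⟨S, p⟩ h
    have h' := h
    simp only [TT, mem_filter, mem_univ, true_and] at h'
    obtain ⟨h0, h1, h2⟩ := h'
    rw [mem_PU] at h1
    by_cases hxS : x ∈ S
    · have hKS := hcl2 S p h x hxK hxS
      rw [he1 S p hxS]
      simp only [TT, mem_filter, mem_univ, true_and, mem_PU]
      refine ⟨fun hh => h0 (mem_sdiff.1 hh).1, ?_, ?_⟩
      · intro y hy hyz
        rw [Perm.mul_apply]
        by_cases hyK : y ∈ K
        · have h3 := hciK y hyK
          rw [h2 _ (hKS h3), ← hcK _ h3, hcc]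
        · have hyS : y ∉ S := fun hh => hy (mem_sdiff.2 ⟨hh, hyK⟩)
          rw [hciN y hyK, h1 y hyS hyz]
      · intro y hy
        obtain ⟨hyS, hyK⟩ := mem_sdiff.1 hy
        rw [Perm.mul_apply, hciN y hyK, h2 y hyS]
    · have hd := hdisj S p h hxS
      rw [he2 S p hxS]
      simp only [TT, mem_filter, mem_univ, true_and, mem_PU]
      refine ⟨fun hh => (mem_union.1 hh).elim h0 hzK, ?_, ?_⟩
      · intro y hy hyz
        rw [mem_union, not_or] at hy
        rw [Perm.mul_apply, hcN y hy.2, h1 y hy.1 hyz]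
      · intro y hy
        rw [Perm.mul_apply]
        rcases mem_union.1 hy with hyS | hyK
        · rw [hcN y (hd y hyS), h2 y hyS]
        · have h3 := hσK y hyK
          rw [hcK y hyK]
          refine h1 _ (fun hh => hd _ hh h3) ?_
          rintro h4
          exact hzK (h4 ▸ h3)
  · rintro ⟨S, p⟩ h
    by_cases hxS : x ∈ S
    · have hKS := hcl2 S p h x hxK hxS
      rw [he1 S p hxS, he2 _ _ (by simp [hxK]), Finset.sdiff_union_of_subset hKS]
      simp
    · have hd := hdisj S p h hxS
      rw [he2 S p hxS, he1 _ _ (by simp [hxK]),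
        Finset.union_sdiff_cancel_right (Finset.disjoint_left.2 hd)]
      simp

/-- coefficient of `σ` in the alternating sum of hook elements -/
def zc {d : ℕ} (z : Fin d) (σ : Perm (Fin d)) : ℤ :=
  ∑ S ∈ univ.filter (fun S : Finset (Fin d) => z ∉ S), ∑ p ∈ PU z S, ∑ q ∈ QV S,
    (-1) ^ S.card * ((Perm.sign p : ℤˣ) : ℤ) * (if p * q = σ then 1 else 0)

lemma zc_eq_zero {d : ℕ} {z : Fin d} {σ : Perm (Fin d)} {x : Fin d} (hx : ¬ σ.SameCycle x z) :
    zc z σ = 0 := by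
  classical
  rw [← TT_sum hx, zc, TT, Finset.sum_filter, Finset.sum_filter, Fintype.sum_prod_type]
  refine Finset.sum_congr rfl fun S _ => ?_
  by_cases hz : z ∈ S
  · simp [hz]
  simp only [hz, not_false_eq_true, if_true, true_and]
  rw [PU, Finset.sum_filter]
  refine Finset.sum_congr rfl fun p _ => ?_
  by_cases hp : ∀ x, x ∉ S → x ≠ z → p x = x
  · rw [if_pos hp]
    simp only [mem_filter, mem_univ, true_and, ← Finset.mul_sum]
    have h1 : ∑ q ∈ QV S, (if p * q = σ then (1 : ℤ) else 0) =
        if ∀ x ∈ S, p x = σ x then 1 else 0 := by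
      have h2 : ∀ q, (p * q = σ) ↔ (p⁻¹ * σ = q) := fun q => by
        rw [inv_mul_eq_iff_eq_mul, eq_comm]
      simp only [h2, Finset.sum_ite_eq]
      refine if_congr ?_ rfl rfl
      rw [mem_QV]
      refine forall₂_congr fun y _ => ?_
      rw [Perm.mul_apply, Perm.inv_eq_iff_eq, eq_comm]
    rw [h1]
    by_cases h3 : ∀ x ∈ S, p x = σ x
    · rw [if_pos h3, if_pos ⟨hp, h3⟩, mul_one]
    · rw [if_neg h3, if_neg (fun h => h3 h.2), mul_zero]
  · rw [if_neg hp, if_neg]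
    rintro ⟨h, _⟩
    exact hp (mem_PU.1 h)

lemma zc_sum {d : ℕ} (z : Fin d) : ∑ σ, zc z σ = d.factorial := by
  classical
  unfold zc
  rw [Finset.sum_comm, Finset.sum_eq_single ∅]
  · rw [Finset.sum_comm]
    have h1 : PU z ∅ = {1} := by
      ext p
      rw [mem_singleton]
      constructor
      · intro h; exact PU_QV_one h (by simp)
      · rintro rfl; simp [mem_PU]
    rw [h1]
    simp only [sum_singleton]
    have h2 : QV (∅ : Finset (Fin d)) = univ := by ext q; simp [mem_QV]
    rw [h2]
    rw [Finset.sum_comm]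
    simp [Fintype.card_perm]
  · intro S hS hne
    have hz : z ∉ S := by simpa using hS
    rw [Finset.sum_comm]
    have h0 : ∑ p ∈ PU z S, ((Perm.sign p : ℤˣ) : ℤ) = 0 := by
      have h := inner_sum (n := 1) (z := z) (S := S) (q := 1) (by simp [mem_QV]) (fun _ => 0)
      rw [if_neg] at h
      · rw [← h]
        refine Finset.sum_congr rfl fun p _ => ?_
        rw [if_pos (by funext x; rfl)]; simp
      · rintro ⟨h1, _⟩
        obtain ⟨y, hy⟩ := Finset.nonempty_iff_ne_empty.2 hne
        have : y = z := h1 (by simp [hy]) (by simp) rfl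
        exact hz (this ▸ hy)
    have h1 : ∀ p ∈ PU z S, ∑ σ : Perm (Fin d), ∑ q ∈ QV S,
        (-1) ^ S.card * ((Perm.sign p : ℤˣ) : ℤ) * (if p * q = σ then 1 else 0) =
        ((-1) ^ S.card * (QV S).card) * ((Perm.sign p : ℤˣ) : ℤ) := by
      intro p _
      rw [Finset.sum_comm]
      simp
      ring
    rw [Finset.sum_congr rfl h1, ← Finset.mul_sum, h0, mul_zero]
  · intro h; simp at h

end WgAux
namespace WgAux
open Equiv Finset

lemma diff_identity (m k : ℕ) (y : ℕ) :
    (fwdDiff 1)^[k] (fun y : ℕ => (1 : ℂ) / ((y + 1).ascFactorial m : ℕ)) y =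
      (-1) ^ k * (m.ascFactorial k : ℕ) / ((y + 1).ascFactorial (m + k) : ℕ) := by
  induction k generalizing y with
  | zero => simp
  | succ k ih =>
    rw [Function.iterate_succ_apply', fwdDiff, ih, ih]
    have e1 : ((y + 1).ascFactorial (m + (k + 1)) : ℕ) =
        (y + 1) * (y + 1 + 1).ascFactorial (m + k) := by
      rw [← add_assoc, Nat.ascFactorial_succ, Nat.succ_ascFactorial]
    have e2 : ((y + 1) * (y + 1 + 1).ascFactorial (m + k) : ℕ) =
        (y + 1 + (m + k)) * (y + 1).ascFactorial (m + k) := Nat.succ_ascFactorial _ _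
    rw [e1, Nat.ascFactorial_succ]
    have p1 : ((y + 1 + 1).ascFactorial (m + k) : ℂ) ≠ 0 := by
      exact_mod_cast (Nat.ascFactorial_pos _ _).ne'
    have p2 : ((y + 1).ascFactorial (m + k) : ℂ) ≠ 0 := by
      exact_mod_cast (Nat.ascFactorial_pos _ _).ne'
    have p3 : (y + 1 : ℂ) ≠ 0 := by exact_mod_cast Nat.succ_ne_zero y
    have e3 : ((y + 1 : ℂ)) * ((y + 1 + 1).ascFactorial (m + k) : ℕ) =
        (y + 1 + (m + k)) * ((y + 1).ascFactorial (m + k) : ℕ) := by exact_mod_cast e2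
    push_cast
    rw [pow_succ]
    have p4 : (y + 1 + (m + k) : ℂ) ≠ 0 := by
      have : ((y + 1 + (m + k) : ℕ) : ℂ) ≠ 0 := by exact_mod_cast (by omega)
      simpa using this
    have e4 : ((y + 1).ascFactorial (m + k) : ℂ) =
        (y + 1) * ((y + 1 + 1).ascFactorial (m + k) : ℕ) / (y + 1 + (m + k)) := by
      rw [e3]; field_simp
    rw [e4]
    field_simp
    ring

lemma asc_desc {d n b : ℕ} (hb : b < d) (hn : d ≤ n) :
    n.ascFactorial (d - b) * (n - 1).descFactorial b = (n - b).ascFactorial d := by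
  have h1 : (n - b).ascFactorial b = (n - 1).descFactorial b := by
    have := Nat.add_descFactorial_eq_ascFactorial' (n - b) b
    rw [← this]
    congr 1
    omega
  have h2 := Nat.ascFactorial_mul_ascFactorial (n - b) b (d - b)
  rw [show n - b + b = n by omega, show b + (d - b) = d by omega] at h2
  rw [← h1, ← h2, mul_comm]

lemma sum_identity {d n : ℕ} (hd : 1 ≤ d) (hn : d ≤ n) :
    ∑ b ∈ range d, ((d - 1).choose b : ℂ) * ((-1) ^ b *
      (1 / ((n.ascFactorial (d - b) * (n - 1).descFactorial b : ℕ) : ℂ))) =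
      (-1) ^ (d - 1) * (d.ascFactorial (d - 1) : ℕ) / ((n - d + 1).ascFactorial (d + (d - 1)) : ℕ) := by
  rw [← diff_identity d (d - 1) (n - d), fwdDiff_iter_eq_sum_shift]
  rw [show d - 1 + 1 = d by omega, ← Finset.sum_range_reflect]
  refine Finset.sum_congr rfl fun j hj => ?_
  have hj' := Finset.mem_range.1 hj
  rw [asc_desc (by omega) hn]
  rw [show n - (d - 1 - j) = n - d + j • 1 + 1 by simp; omega, Nat.choose_symm (by omega)]
  simp
  ring

lemma prod_identity {d n : ℕ} (hd : 1 ≤ d) (hn : d ≤ n) :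
    ∏ j ∈ Finset.Icc (-(d : ℤ) + 1) ((d : ℤ) - 1), ((n : ℂ) - (j : ℂ)) =
      ((n - d + 1).ascFactorial (d + (d - 1)) : ℕ) := by
  rw [Nat.ascFactorial_eq_prod_range]
  push_cast
  symm
  refine Finset.prod_bij (fun i _ => (d : ℤ) - 1 - i) ?_ ?_ ?_ ?_
  · intro i hi
    rw [mem_range] at hi
    rw [mem_Icc]
    omega
  · intro a _ b _ h
    omega
  · intro j hj
    rw [mem_Icc] at hj
    refine ⟨((d : ℤ) - 1 - j).toNat, ?_, ?_⟩
    · rw [mem_range]; omega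
    · omega
  · intro i _
    push_cast [Nat.cast_sub hn]
    ring

lemma catalan_identity {d : ℕ} (hd : 1 ≤ d) :
    d.factorial * catalan (d - 1) = d.ascFactorial (d - 1) := by
  obtain ⟨k, rfl⟩ : ∃ k, d = k + 1 := ⟨d - 1, by omega⟩
  simp only [Nat.add_sub_cancel]
  have h1 := succ_mul_catalan_eq_centralBinom k
  have h2 := Nat.factorial_mul_ascFactorial k k
  have h3 := Nat.choose_mul_factorial_mul_factorial (show k ≤ 2 * k by omega)
  rw [← Nat.centralBinom_eq_two_mul_choose, show 2 * k - k = k by omega, two_mul, ← h2, ← h1] at h3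
  apply Nat.eq_of_mul_eq_mul_left (Nat.factorial_pos k)
  rw [← h3, Nat.factorial_succ]
  ring

lemma cycleCount_conj {d : ℕ} (g σ : Perm (Fin d)) :
    (g * σ * g⁻¹).cycleCount = σ.cycleCount := by
  unfold Perm.cycleCount
  rw [Perm.cycleType_conj]
  congr 1
  symm
  refine Finset.card_bij (fun x _ => g x) ?_ ?_ ?_
  · intro x hx
    have h1 := (Finset.mem_filter.1 hx).2
    refine Finset.mem_filter.2 ⟨mem_univ _, ?_⟩
    simp [h1]
  · intro a _ b _ h
    exact g.injective h
  · intro y hy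
    have h1 := (Finset.mem_filter.1 hy).2
    refine ⟨g⁻¹ y, Finset.mem_filter.2 ⟨mem_univ _, ?_⟩, by simp⟩
    rw [Perm.mul_apply, Perm.mul_apply] at h1
    rw [Perm.eq_inv_iff_eq, h1]

/-- antisymmetrizer -/
noncomputable def AA {d : ℕ} (z : Fin d) (S : Finset (Fin d)) : MonoidAlgebra ℂ (Perm (Fin d)) :=
  ∑ p ∈ PU z S, MonoidAlgebra.single p (((Perm.sign p : ℤˣ) : ℤ) : ℂ)

/-- symmetrizer -/
noncomputable def BB {d : ℕ} (S : Finset (Fin d)) : MonoidAlgebra ℂ (Perm (Fin d)) :=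
  ∑ q ∈ QV S, MonoidAlgebra.single q 1

lemma AA_mul {d : ℕ} {z : Fin d} {S : Finset (Fin d)} {p : Perm (Fin d)} (hp : p ∈ PU z S) :
    AA z S * MonoidAlgebra.single p 1 = (((Perm.sign p : ℤˣ) : ℤ) : ℂ) • AA z S := by
  unfold AA
  rw [Finset.sum_mul, Finset.smul_sum]
  refine Finset.sum_bij (fun a _ => a * p) ?_ ?_ ?_ ?_
  · intro a ha; exact PU_mul ha hp
  · intro a _ b _ h; exact mul_right_cancel h
  · intro b hb; exact ⟨b * p⁻¹, PU_mul hb (PU_inv hp), by simp⟩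
  · intro a _
    rw [MonoidAlgebra.single_mul_single, MonoidAlgebra.smul_single']
    congr 1
    rw [Perm.sign_mul]
    push_cast
    have : (((Perm.sign p : ℤˣ) : ℤ) : ℂ) * (((Perm.sign p : ℤˣ) : ℤ) : ℂ) = 1 := by
      rcases Int.units_eq_one_or (Perm.sign p) with h | h <;> simp [h]
    linear_combination (-(((Perm.sign a : ℤˣ) : ℤ) : ℂ)) * this

lemma mul_BB {d : ℕ} {S : Finset (Fin d)} {q : Perm (Fin d)} (hq : q ∈ QV S) :
    MonoidAlgebra.single q 1 * BB S = BB S := by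
  unfold BB
  rw [Finset.mul_sum]
  refine Finset.sum_bij (fun a _ => q * a) ?_ ?_ ?_ ?_
  · intro a ha; exact QV_mul hq ha
  · intro a _ b _ h; exact mul_left_cancel h
  · intro b hb; exact ⟨q⁻¹ * b, QV_mul (QV_inv hq) hb, by simp⟩
  · intro a _
    rw [MonoidAlgebra.single_mul_single, mul_one]

lemma exists_factor {d : ℕ} {z : Fin d} {S : Finset (Fin d)} (hz : z ∉ S) (σ : Perm (Fin d))
    (h : ∀ i ∈ insert z S, ∀ j ∈ insert z S, σ⁻¹ i ∉ S → σ⁻¹ j ∉ S → i = j) :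
    ∃ p ∈ PU z S, ∀ x ∈ S, p x = σ x := by
  classical
  have hsub : ∀ x ∈ S, σ x ∈ insert z S := by
    have h1 : ((insert z S).filter fun i => σ⁻¹ i ∉ S).card ≤ 1 := by
      rw [Finset.card_le_one]
      intro a ha b hb
      rw [mem_filter] at ha hb
      exact h a ha.1 b hb.1 ha.2 hb.2
    have h2 := Finset.card_filter_add_card_filter_not (s := insert z S) (fun i => σ⁻¹ i ∈ S)
    rw [Finset.card_insert_of_notMem hz] at h2
    have h3 : ((insert z S).filter fun i => σ⁻¹ i ∈ S) = S.image σ := by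
      apply Finset.eq_of_subset_of_card_le
      · intro i hi
        rw [mem_filter] at hi
        exact mem_image.2 ⟨_, hi.2, by simp⟩
      · rw [Finset.card_image_of_injective _ σ.injective]
        omega
    intro x hx
    have h4 : σ x ∈ S.image σ := mem_image_of_mem _ hx
    rw [← h3, mem_filter] at h4
    exact h4.1
  let e : {u : {u : Fin d // u ∈ insert z S} // u.1 ∈ S} ≃
      {u : {u : Fin d // u ∈ insert z S} // σ⁻¹ u.1 ∈ S} :=
    { toFun := fun u => ⟨⟨σ u.1.1, hsub _ u.2⟩, by simpa using u.2⟩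
      invFun := fun u => ⟨⟨σ⁻¹ u.1.1, mem_insert_of_mem u.2⟩, u.2⟩
      left_inv := fun u => by ext; simp
      right_inv := fun u => by ext; simp }
  refine ⟨Perm.ofSubtype (Equiv.extendSubtype e), ?_, ?_⟩
  · rw [mem_PU]
    intro x h1 h2
    exact Perm.ofSubtype_apply_of_not_mem _ (by simp [h1, h2])
  · intro x hx
    have hx' : x ∈ insert z S := mem_insert_of_mem hx
    rw [Perm.ofSubtype_apply_of_mem _ hx',
      Equiv.extendSubtype_apply_of_mem e ⟨x, hx'⟩ hx]
    rfl

lemma sandwich {d : ℕ} {z : Fin d} {S : Finset (Fin d)} (hz : z ∉ S) (σ : Perm (Fin d)) :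
    ∃ k : ℂ, AA z S * MonoidAlgebra.single σ 1 * BB S = k • (AA z S * BB S) := by
  by_cases h : ∀ i ∈ insert z S, ∀ j ∈ insert z S, σ⁻¹ i ∉ S → σ⁻¹ j ∉ S → i = j
  · obtain ⟨p, hp, hpS⟩ := exists_factor hz σ h
    have hq : p⁻¹ * σ ∈ QV S := by
      rw [mem_QV]
      intro x hx
      rw [Perm.mul_apply, Perm.inv_eq_iff_eq, hpS x hx]
    refine ⟨(((Perm.sign p : ℤˣ) : ℤ) : ℂ), ?_⟩
    have h1 : MonoidAlgebra.single σ (1 : ℂ) =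
        MonoidAlgebra.single p 1 * MonoidAlgebra.single (p⁻¹ * σ) 1 := by
      rw [MonoidAlgebra.single_mul_single]; simp
    rw [h1, ← mul_assoc, AA_mul hp, mul_assoc, mul_BB hq, smul_mul_assoc]
  · push Not at h
    obtain ⟨i, hi, j, hj, hi', hj', hne⟩ := h
    refine ⟨0, ?_⟩
    have h1 : MonoidAlgebra.single (swap i j) (1 : ℂ) * MonoidAlgebra.single σ 1 =
        MonoidAlgebra.single σ 1 * MonoidAlgebra.single (swap (σ⁻¹ i) (σ⁻¹ j)) 1 := by
      rw [MonoidAlgebra.single_mul_single, MonoidAlgebra.single_mul_single]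
      congr 1
      rw [Equiv.mul_swap_eq_swap_mul]
      simp
    have h2 : AA z S * MonoidAlgebra.single σ 1 * BB S =
        -(AA z S * MonoidAlgebra.single σ 1 * BB S) := by
      conv_lhs => rw [← mul_BB (QV_swap hi' hj'), ← mul_assoc, mul_assoc (AA z S), ← h1,
        ← mul_assoc, AA_mul (PU_swap hi hj), Perm.sign_swap hne]
      simp [neg_mul]
    rw [zero_smul]
    have h3 : (2 : ℂ) • (AA z S * MonoidAlgebra.single σ 1 * BB S) = 0 := by
      rw [two_smul]
      nth_rewrite 1 [h2]
      exact neg_add_cancel _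
    exact (smul_eq_zero.1 h3).resolve_left two_ne_zero

lemma coeff_triple {d : ℕ} (z : Fin d) (S : Finset (Fin d)) (u : Perm (Fin d) → ℂ) :
    (AA z S * (∑ σ : Perm (Fin d), MonoidAlgebra.single (R := ℂ) σ (u σ)) * BB S).coeff 1 =
      ∑ p ∈ PU z S, ∑ q ∈ QV S, (((Perm.sign p : ℤˣ) : ℤ) : ℂ) * u (p * q) := by
  classical
  unfold AA BB
  have h1 : ∀ p q σ : Perm (Fin d), (p * σ * q = 1) ↔ (p⁻¹ * q⁻¹ = σ) := by
    intro p q σ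
    rw [mul_eq_one_iff_eq_inv, inv_mul_eq_iff_eq_mul, eq_comm]
  have h2 : ∀ F : Perm (Fin d) → ℂ, ∑ p ∈ PU z S, F p⁻¹ = ∑ p ∈ PU z S, F p := by
    intro F
    refine Finset.sum_bij (fun a _ => a⁻¹) ?_ ?_ ?_ ?_
    · intro a ha; exact PU_inv ha
    · intro a _ b _ h; exact inv_injective h
    · intro b hb; exact ⟨b⁻¹, PU_inv hb, by simp⟩
    · intro a _; rfl
  have h3 : ∀ F : Perm (Fin d) → ℂ, ∑ p ∈ QV S, F p⁻¹ = ∑ p ∈ QV S, F p := by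
    intro F
    refine Finset.sum_bij (fun a _ => a⁻¹) ?_ ?_ ?_ ?_
    · intro a ha; exact QV_inv ha
    · intro a _ b _ h; exact inv_injective h
    · intro b hb; exact ⟨b⁻¹, QV_inv hb, by simp⟩
    · intro a _; rfl
  rw [← h2]
  have h4 : ∀ p : Perm (Fin d), ∑ q ∈ QV S, (((Perm.sign p⁻¹ : ℤˣ) : ℤ) : ℂ) * u (p⁻¹ * q) =
      ∑ q ∈ QV S, ∑ σ, if p * σ * q = 1 then (((Perm.sign p : ℤˣ) : ℤ) : ℂ) * u σ else 0 := by
    intro p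
    rw [← h3]
    refine Finset.sum_congr rfl fun q _ => ?_
    simp only [h1]
    rw [Finset.sum_ite_eq]
    simp
  rw [Finset.sum_congr rfl fun p _ => h4 p]
  simp only [Finset.sum_mul, Finset.mul_sum, MonoidAlgebra.single_mul_single,
    MonoidAlgebra.coeff_sum, Finsupp.finsetSum_apply, MonoidAlgebra.coeff_single,
    Finsupp.single_apply, mul_one]
  conv_rhs => rw [Finset.sum_comm]
  refine Finset.sum_congr rfl fun q _ => ?_
  rw [Finset.sum_comm]

lemma G_comm {d : ℕ} (n : ℕ) (x : MonoidAlgebra ℂ (Perm (Fin d))) :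
    (∑ σ : Perm (Fin d), MonoidAlgebra.single (R := ℂ) σ ((n : ℂ) ^ σ.cycleCount)) * x =
    x * (∑ σ : Perm (Fin d), MonoidAlgebra.single (R := ℂ) σ ((n : ℂ) ^ σ.cycleCount)) := by
  refine MonoidAlgebra.induction_linear x ?_ ?_ ?_
  · simp
  · intro f g hf hg
    rw [mul_add, add_mul, hf, hg]
  · intro g r
    rw [Finset.sum_mul, Finset.mul_sum]
    symm
    refine Fintype.sum_equiv (MulAut.conj g).toEquiv _ _ fun σ => ?_
    simp only [MonoidAlgebra.single_mul_single, MulEquiv.toEquiv_eq_coe, EquivLike.coe_coe,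
      MulAut.conj_apply, cycleCount_conj, inv_mul_cancel_right]
    rw [mul_comm r]

lemma W_comm {d n : ℕ} (w : Perm (Fin d) → ℂ)
    (hw : (∑ σ : Perm (Fin d), MonoidAlgebra.single (R := ℂ) σ (w σ)) *
          (∑ σ : Perm (Fin d),
            MonoidAlgebra.single (R := ℂ) σ ((n : ℂ) ^ σ.cycleCount)) = 1)
    (x : MonoidAlgebra ℂ (Perm (Fin d))) :
    (∑ σ : Perm (Fin d), MonoidAlgebra.single (R := ℂ) σ (w σ)) * x =
      x * (∑ σ : Perm (Fin d), MonoidAlgebra.single (R := ℂ) σ (w σ)) := by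
  have hG := G_comm (d := d) n
  generalize (∑ σ : Perm (Fin d), MonoidAlgebra.single (R := ℂ) σ (w σ)) = W at *
  generalize (∑ σ : Perm (Fin d),
            MonoidAlgebra.single (R := ℂ) σ ((n : ℂ) ^ σ.cycleCount)) = G at *
  have h1 : G * W = 1 := by rw [hG, hw]
  calc W * x = W * x * (G * W) := by rw [h1, mul_one]
    _ = W * (x * G) * W := by simp only [mul_assoc]
    _ = W * (G * x) * W := by rw [hG]
    _ = (W * G) * x * W := by simp only [mul_assoc]
    _ = x * W := by rw [hw, one_mul]

lemma w_conj {d n : ℕ} (w : Perm (Fin d) → ℂ)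
    (hw : (∑ σ : Perm (Fin d), MonoidAlgebra.single (R := ℂ) σ (w σ)) *
          (∑ σ : Perm (Fin d),
            MonoidAlgebra.single (R := ℂ) σ ((n : ℂ) ^ σ.cycleCount)) = 1)
    {σ τ : Perm (Fin d)} (h : IsConj σ τ) : w σ = w τ := by
  classical
  obtain ⟨g, hg⟩ := isConj_iff.1 h
  have h1 := congrArg (fun y => MonoidAlgebra.coeff y (g * σ))
    (W_comm w hw (MonoidAlgebra.single g 1))
  have h2 : ∀ τ, (∑ σ : Perm (Fin d), MonoidAlgebra.single (R := ℂ) σ (w σ)).coeff τ = w τ := by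
    intro τ
    simp [MonoidAlgebra.coeff_sum, Finsupp.finsetSum_apply, Finsupp.single_apply]
  simp only [MonoidAlgebra.coeff_mul_single_apply, MonoidAlgebra.coeff_single_mul_apply, h2,
    mul_one, one_mul, inv_mul_cancel_left, hg] at h1
  exact h1.symm

lemma key {d n : ℕ} {z : Fin d} {S : Finset (Fin d)} (hz : z ∉ S)
    (w : Perm (Fin d) → ℂ)
    (hw : (∑ σ : Perm (Fin d), MonoidAlgebra.single (R := ℂ) σ (w σ)) *
          (∑ σ : Perm (Fin d),
            MonoidAlgebra.single (R := ℂ) σ ((n : ℂ) ^ σ.cycleCount)) = 1) :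
    ((n.ascFactorial (d - S.card) * (n - 1).descFactorial S.card : ℕ) : ℂ) *
      ∑ p ∈ PU z S, ∑ q ∈ QV S, (((Perm.sign p : ℤˣ) : ℤ) : ℂ) * w (p * q) = 1 := by
  classical
  have hone : (AA z S * BB S).coeff 1 = 1 := by
    have h := coeff_triple z S (fun σ => if σ = 1 then 1 else 0)
    have h1 : (∑ σ : Perm (Fin d), MonoidAlgebra.single (R := ℂ) σ (if σ = 1 then 1 else 0)) = 1 := by
      rw [Finset.sum_eq_single 1]
      · simp [MonoidAlgebra.one_def]
      · intro b _ hb; simp [hb]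
      · simp
    rw [h1, mul_one] at h
    rw [h, Finset.sum_eq_single 1, Finset.sum_eq_single 1]
    · simp
    · intro b _ hb; simp [hb]
    · intro hh; exact absurd (mem_QV.2 (by simp)) hh
    · intro p hp hne
      refine Finset.sum_eq_zero fun q hq => ?_
      rw [if_neg, mul_zero]
      intro hpq
      apply hne
      apply PU_QV_one hp
      have : p = q⁻¹ := eq_inv_of_mul_eq_one_left hpq
      rw [this]
      exact mem_QV.1 (QV_inv hq)
    · intro hh; exact absurd (mem_PU.2 (by simp)) hh
  obtain ⟨k, hk⟩ : ∃ k : ℂ, AA z S * (∑ σ : Perm (Fin d),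
      MonoidAlgebra.single (R := ℂ) σ ((n : ℂ) ^ σ.cycleCount)) * BB S = k • (AA z S * BB S) := by
    choose f hf using sandwich (d := d) hz
    refine ⟨∑ σ, (n : ℂ) ^ σ.cycleCount * f σ, ?_⟩
    rw [Finset.mul_sum, Finset.sum_mul, Finset.sum_smul]
    refine Finset.sum_congr rfl fun σ _ => ?_
    rw [mul_smul, ← hf σ, ← smul_mul_assoc, ← mul_smul_comm, MonoidAlgebra.smul_single', mul_one]
  have hkval : ((n.ascFactorial (d - S.card) * (n - 1).descFactorial S.card : ℕ) : ℂ) = k := by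
    have h1 := congrArg (fun y => MonoidAlgebra.coeff y 1) hk
    rw [coeff_triple, MonoidAlgebra.coeff_smul_apply, hone, smul_eq_mul, mul_one] at h1
    rw [← h1]
    have h2 := signed_count (n := n) hz
    exact_mod_cast h2.symm
  rw [hkval, ← coeff_triple, ← W_comm w hw]
  rw [← smul_eq_mul, ← MonoidAlgebra.coeff_smul_apply, mul_assoc, ← mul_smul_comm, ← hk,
    ← G_comm, ← mul_assoc, ← mul_assoc, hw, one_mul, hone]

lemma full_conj {d : ℕ} {z : Fin d} {σ : Perm (Fin d)} (h : ∀ x, σ.SameCycle x z) :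
    IsConj σ (finRotate d) := by
  rcases d with _ | _ | d
  · exact z.elim0
  · have h0 : σ = finRotate (0 + 1) := Equiv.ext fun x => Fin.ext (by omega)
    rw [h0]
  · have hne : ∀ x, σ x ≠ x := by
      intro x hx
      obtain ⟨y, hy⟩ := exists_ne x
      exact hy (((h x).trans (h y).symm).eq_of_left hx).symm
    have hcyc : σ.IsCycle := ⟨z, hne z, fun y _ => (h y).symm⟩
    have hsupp : σ.support = univ := by
      ext x; simp [hne x]
    rw [Perm.isConj_iff_cycleType_eq, hcyc.cycleType, hsupp, cycleType_finRotate]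
    simp

end WgAux

open Finset in
/-- **The Weingarten function of a full cycle**: for the full cycle `γ = (1 2 ⋯ d)` (realized
as `finRotate d`), `Wg(n,γ) = (−1)^{d−1}·Cat_{d−1} / Π_{j=−d+1}^{d−1}(n−j)`.  Here `Wg(n,·)`
is characterized (for `n ≥ d`) by the fact that `Σ_σ Wg(n,σ)·σ` is the inverse of
`Σ_σ n^{#σ}·σ` in the group algebra `ℂ[S_d]` (hypothesis `hw`). -/
theorem weingarten_full_cycle
    (d n : ℕ) (hd : 1 ≤ d) (hn : d ≤ n)
    (w : Equiv.Perm (Fin d) → ℂ)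
    (hw : (∑ σ : Equiv.Perm (Fin d), MonoidAlgebra.single (R := ℂ) σ (w σ)) *
          (∑ σ : Equiv.Perm (Fin d),
            MonoidAlgebra.single (R := ℂ) σ ((n : ℂ) ^ σ.cycleCount)) = 1) :
    w (finRotate d) =
      (-1 : ℂ) ^ (d - 1) * (catalan (d - 1) : ℂ) /
        ∏ j ∈ Finset.Icc (-(d : ℤ) + 1) ((d : ℤ) - 1), ((n : ℂ) - (j : ℂ)) := by
  classical
  let z : Fin d := ⟨0, hd⟩
  have h1 : ∑ σ, (WgAux.zc z σ : ℂ) * w σ = d.factorial * w (finRotate d) := by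
    have h2 : ∀ σ, (WgAux.zc z σ : ℂ) * w σ = (WgAux.zc z σ : ℂ) * w (finRotate d) := by
      intro σ
      by_cases h : ∀ x, σ.SameCycle x z
      · rw [WgAux.w_conj w hw (WgAux.full_conj h)]
      · push Not at h
        obtain ⟨x, hx⟩ := h
        rw [WgAux.zc_eq_zero hx]; simp
    rw [Finset.sum_congr rfl fun σ _ => h2 σ, ← Finset.sum_mul]
    congr 1
    have h3 := WgAux.zc_sum z
    exact_mod_cast h3
  have h2 : ∑ σ, (WgAux.zc z σ : ℂ) * w σ =
      ∑ S ∈ univ.filter (fun S : Finset (Fin d) => z ∉ S), (-1) ^ S.card *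
        (1 / ((n.ascFactorial (d - S.card) * (n - 1).descFactorial S.card : ℕ) : ℂ)) := by
    unfold WgAux.zc
    simp only [Int.cast_sum, Finset.sum_mul]
    rw [Finset.sum_comm]
    refine Finset.sum_congr rfl fun S hS => ?_
    have hz : z ∉ S := by simpa using hS
    have hk := WgAux.key hz w hw
    rw [eq_one_div_of_mul_eq_one_right hk |>.symm, Finset.mul_sum, Finset.sum_comm]
    refine Finset.sum_congr rfl fun p _ => ?_
    rw [Finset.mul_sum, Finset.sum_comm]
    refine Finset.sum_congr rfl fun q _ => ?_
    rw [Finset.sum_eq_single (p * q)]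
    · simp; ring
    · intro b _ hb
      rw [if_neg (Ne.symm hb)]; simp
    · simp
  have h3 : (univ.filter (fun S : Finset (Fin d) => z ∉ S)) = (univ.erase z).powerset := by
    ext S
    simp only [mem_filter, mem_univ, true_and, mem_powerset]
    constructor
    · intro h x hx
      exact mem_erase.2 ⟨fun hh => h (hh ▸ hx), mem_univ _⟩
    · intro h hz
      simpa using h hz
  have hcard : (univ.erase z).card = d - 1 := by simp
  rw [h3, Finset.sum_powerset_apply_card (fun b => (-1 : ℂ) ^ b *
        (1 / ((n.ascFactorial (d - b) * (n - 1).descFactorial b : ℕ) : ℂ))), hcard,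
    show d - 1 + 1 = d by omega] at h2
  simp only [nsmul_eq_mul] at h2
  rw [WgAux.sum_identity hd hn, h1, ← WgAux.catalan_identity hd] at h2
  rw [WgAux.prod_identity hd hn]
  have hf : (d.factorial : ℂ) ≠ 0 := by exact_mod_cast (Nat.factorial_pos d).ne'
  apply mul_left_cancel₀ hf
  rw [h2]
  push_cast
  ring
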